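/- arXiv:2301.05811 — 2 statements merged into one kernel-verified Lean document; each statement's English description precedes it below -/
import Mathlib

section
/- Let n ≥ 1, let z ∈ ℝⁿ be a unit vector, and let L be an integer with L ≥ n. Then for every index i, |Round(z,L)[i] − z[i]| ≤ n/√L; that is, ‖Round(z,L) − z‖_∞ ≤ n/√L. Moreover, for every index i other than the chosen maximizing index i*, the sharper bound |Round(z,L)[i] − z[i]| ≤ 1/√L holds. -/
open Finset

/-- An index `i*` maximizing `|z i|`. -/
noncomputable def maxIndex {n : ℕ} [NeZero n] (z : Fin n → ℝ) : Fin n :=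
  (Finset.exists_max_image Finset.univ (fun i => |z i|)
    (Finset.univ_nonempty_iff.mpr ⟨⟨0, Nat.pos_of_ne_zero (NeZero.ne n)⟩⟩)).choose

/-- `Round(z, L)`: first set `z̃ i = sign(z i) ⬝ √(⌊z i ^ 2 ⬝ L⌋ / L)` for every `i`; then,
letting `i*` be an index maximizing `|z i|` and `δ = 1 - ∑ i, z̃ i ^ 2`, replace `z̃ i*` by
`sign(z i*) ⬝ √(z̃ i* ^ 2 + δ)`. -/
noncomputable def roundVec {n : ℕ} (z : Fin n → ℝ) (L : ℕ) : Fin n → ℝ :=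
  if hn : n = 0 then z
  else
    haveI : NeZero n := ⟨hn⟩
    let zt : Fin n → ℝ := fun i => Real.sign (z i) * Real.sqrt ((⌊(z i) ^ 2 * L⌋ : ℝ) / L)
    let istar : Fin n := maxIndex z
    fun i => if i = istar then
        Real.sign (z istar) * Real.sqrt ((zt istar) ^ 2 + (1 - ∑ j, (zt j) ^ 2))
      else zt i

/-!
Rounding `z i ^ 2` down to a multiple of `1 / L` loses less than `1 / L`, and
`|sign x * √y - x| ≤ √|y - x ^ 2|`, so every entry other than `z i*` moves by at most `1 / √L`.
The mass `δ` returned to `i*` is the sum of all losses, its own included, so the new square at `i*`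
exceeds `z i* ^ 2` by the losses at the other `n - 1` indices, and this entry moves by at most
`√((n - 1) / L)`.
-/

section Sqrt

lemma abs_sqrt_sub_sqrt_le_sqrt_abs_sub (x y : ℝ) : |√x - √y| ≤ √|x - y| := by
  wlog hxy : y ≤ x generalizing x y
  · rw [abs_sub_comm, abs_sub_comm x]
    exact this y x (le_of_not_ge hxy)
  rw [abs_of_nonneg (sub_nonneg.mpr (Real.sqrt_le_sqrt hxy)), abs_of_nonneg (sub_nonneg.mpr hxy),
    sub_le_iff_le_add']
  rcases le_total 0 y with hy | hy
  · refine Real.sqrt_le_iff.mpr ⟨by positivity, ?_⟩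
    have hcross : 0 ≤ √y * √(x - y) := by positivity
    rw [add_sq, Real.sq_sqrt hy, Real.sq_sqrt (sub_nonneg.mpr hxy)]
    linarith
  · rw [Real.sqrt_eq_zero_of_nonpos hy, zero_add]
    exact Real.sqrt_le_sqrt (by linarith)

lemma abs_sign_mul_sqrt_sub_le (x y : ℝ) : |Real.sign x * √y - x| ≤ √|y - x ^ 2| := by
  have hroot := abs_sqrt_sub_sqrt_le_sqrt_abs_sub y (x ^ 2)
  rw [Real.sqrt_sq_eq_abs] at hroot
  rcases lt_trichotomy x 0 with hx | rfl | hx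
  · rw [abs_of_neg hx] at hroot
    rwa [Real.sign_of_neg hx, neg_one_mul, ← abs_neg, neg_sub', neg_neg]
  · simp
  · rw [abs_of_pos hx] at hroot
    rwa [Real.sign_of_pos hx, one_mul]

lemma sq_sign_mul_sqrt {x y : ℝ} (hy : 0 ≤ y) (hxy : x = 0 → y = 0) :
    (Real.sign x * √y) ^ 2 = y := by
  rw [mul_pow, Real.sq_sqrt hy]
  rcases eq_or_ne x 0 with hx | hx
  · simp [hxy hx]
  · rcases Real.sign_apply_eq_of_ne_zero x hx with h | h <;> simp [h]

lemma sqrt_div_le_div_sqrt {x : ℝ} (hx : 1 ≤ x) (y : ℝ) : √(x / y) ≤ x / √y := by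
  rw [Real.sqrt_div (zero_le_one.trans hx)]
  gcongr
  exact Real.sqrt_le_self_iff.mpr (.inr hx)

end Sqrt

section RoundDown

variable {K : Type*} [Field K] [LinearOrder K] [FloorRing K]

/-- The largest multiple of `1 / L` that is at most `x`, when `0 < L`; it is `0` when `L = 0`. -/
def roundDown (L x : K) : K := ⌊x * L⌋ / L

@[simp]
lemma roundDown_zero (L : K) : roundDown L 0 = 0 := by
  simp [roundDown]

variable {L : K}

lemma sub_roundDown (hL : L ≠ 0) (x : K) : x - roundDown L x = Int.fract (x * L) / L := by
  rw [roundDown, ← Int.self_sub_floor, sub_div, mul_div_cancel_right₀ x hL]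

variable [IsStrictOrderedRing K]

lemma roundDown_nonneg {x : K} (hL : 0 ≤ L) (hx : 0 ≤ x) : 0 ≤ roundDown L x :=
  div_nonneg (Int.cast_nonneg (Int.floor_nonneg.mpr (mul_nonneg hx hL))) hL

lemma roundDown_le (hL : 0 < L) (x : K) : roundDown L x ≤ x := by
  rw [← sub_nonneg, sub_roundDown hL.ne']
  exact div_nonneg (Int.fract_nonneg _) hL.le

lemma sub_roundDown_lt (hL : 0 < L) (x : K) : x - roundDown L x < 1 / L := by
  rw [sub_roundDown hL.ne']
  exact div_lt_div_of_pos_right (Int.fract_lt_one _) hL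

end RoundDown

section RoundEntry

/-- The entry `z̃ i` of the definition of `Round(z, L)`, before the correction at `i*`, as a
function of the entry `x = z i`. -/
noncomputable def roundEntry (L x : ℝ) : ℝ := Real.sign x * √(roundDown L (x ^ 2))

variable {L : ℝ}

lemma sq_roundEntry (hL : 0 ≤ L) (x : ℝ) : roundEntry L x ^ 2 = roundDown L (x ^ 2) :=
  sq_sign_mul_sqrt (roundDown_nonneg hL (sq_nonneg x)) fun hx => by simp [hx]

lemma abs_roundEntry_sub_le (hL : 0 < L) (x : ℝ) : |roundEntry L x - x| ≤ 1 / √L := by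
  calc |roundEntry L x - x| ≤ √|roundDown L (x ^ 2) - x ^ 2| := abs_sign_mul_sqrt_sub_le _ _
    _ = √(x ^ 2 - roundDown L (x ^ 2)) := by
      rw [abs_sub_comm, abs_of_nonneg (sub_nonneg.mpr (roundDown_le hL _))]
    _ ≤ √(1 / L) := Real.sqrt_le_sqrt (sub_roundDown_lt hL _).le
    _ = 1 / √L := by rw [Real.sqrt_div zero_le_one, Real.sqrt_one]

lemma sq_roundEntry_add_one_sub_sum {ι : Type*} [Fintype ι] [DecidableEq ι] {z : ι → ℝ}
    (hz : ∑ i, z i ^ 2 = 1) (hL : 0 ≤ L) (i : ι) :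
    roundEntry L (z i) ^ 2 + (1 - ∑ j, roundEntry L (z j) ^ 2) =
      z i ^ 2 + ∑ j ∈ univ.erase i, (z j ^ 2 - roundDown L (z j ^ 2)) := by
  simp only [sq_roundEntry hL]
  rw [← hz, ← sum_sub_distrib, ← add_sum_erase univ _ (mem_univ i)]
  ring

end RoundEntry

section RoundVec

variable {n : ℕ} [NeZero n] {z : Fin n → ℝ} {L : ℕ}

lemma roundVec_of_ne {i : Fin n} (hi : i ≠ maxIndex z) : roundVec z L i = roundEntry L (z i) := by
  simp only [roundVec, NeZero.ne n, dite_false, if_neg hi, roundEntry, roundDown]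

lemma roundVec_maxIndex (z : Fin n → ℝ) (L : ℕ) :
    roundVec z L (maxIndex z) = Real.sign (z (maxIndex z)) *
      √(roundEntry L (z (maxIndex z)) ^ 2 + (1 - ∑ j, roundEntry L (z j) ^ 2)) := by
  simp only [roundVec, NeZero.ne n, dite_false, if_true, roundEntry, roundDown]

lemma abs_roundVec_sub_le_of_ne (hL : 0 < L) {i : Fin n} (hi : i ≠ maxIndex z) :
    |roundVec z L i - z i| ≤ 1 / √L := by
  rw [roundVec_of_ne hi]
  exact abs_roundEntry_sub_le (Nat.cast_pos.mpr hL) (z i)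

lemma abs_roundVec_maxIndex_sub_le (hz : ∑ i, z i ^ 2 = 1) (hL : 0 < L) :
    |roundVec z L (maxIndex z) - z (maxIndex z)| ≤ √((n - 1) / L) := by
  have hL_pos : (0 : ℝ) < L := Nat.cast_pos.mpr hL
  rw [roundVec_maxIndex, sq_roundEntry_add_one_sub_sum hz hL_pos.le]
  refine (abs_sign_mul_sqrt_sub_le _ _).trans (Real.sqrt_le_sqrt ?_)
  rw [add_sub_cancel_left,
    abs_of_nonneg (sum_nonneg fun j _ => sub_nonneg.mpr (roundDown_le hL_pos _))]
  calc ∑ j ∈ univ.erase (maxIndex z), (z j ^ 2 - roundDown (L : ℝ) (z j ^ 2))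
      ≤ #(univ.erase (maxIndex z)) • (1 / (L : ℝ)) :=
        sum_le_card_nsmul _ _ _ fun j _ => (sub_roundDown_lt hL_pos _).le
    _ = (n - 1) / L := by
      rw [card_erase_of_mem (mem_univ _), card_fin, nsmul_eq_mul, Nat.cast_pred (NeZero.pos n),
        mul_one_div]

theorem roundVec_entrywise_error_general (hz : ∑ i, z i ^ 2 = 1) (hL : 0 < L) :
    (∀ i, |roundVec z L i - z i| ≤ √(n / L)) ∧
      ∀ i, i ≠ maxIndex z → |roundVec z L i - z i| ≤ 1 / √L := by
  refine ⟨fun i => ?_, fun i => abs_roundVec_sub_le_of_ne hL⟩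
  rcases eq_or_ne i (maxIndex z) with rfl | hi
  · exact (abs_roundVec_maxIndex_sub_le hz hL).trans (by gcongr; linarith)
  · calc |roundVec z L i - z i| ≤ 1 / √L := abs_roundVec_sub_le_of_ne hL hi
      _ ≤ √n / √L := by gcongr; exact Real.one_le_sqrt.mpr (Nat.one_le_cast.mpr NeZero.one_le)
      _ = √(n / L) := (Real.sqrt_div n.cast_nonneg _).symm

end RoundVec

/-- For `n ≥ 1`, a unit vector `z ∈ ℝⁿ`, and an integer `L ≥ n`: every entry of
`Round(z, L)` is within `n/√L` of the corresponding entry of `z`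
(i.e. `‖Round(z,L) - z‖_∞ ≤ n/√L`), and moreover every index `i` other than the chosen
maximizing index `i*` satisfies the sharper bound `|Round(z, L) i - z i| ≤ 1/√L`. -/
theorem roundVec_entrywise_error {n : ℕ} [NeZero n] (hn : 1 ≤ n) (z : Fin n → ℝ)
    (hz1 : ∑ i, (z i) ^ 2 = 1) (L : ℕ) (hL : n ≤ L) :
    (∀ i, |roundVec z L i - z i| ≤ (n : ℝ) / Real.sqrt L)
    ∧ (∀ i, i ≠ maxIndex z → |roundVec z L i - z i| ≤ 1 / Real.sqrt L) := by
  obtain ⟨herr, herr_of_ne⟩ := roundVec_entrywise_error_general hz1 (hn.trans hL)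
  exact ⟨fun i => (herr i).trans (sqrt_div_le_div_sqrt (Nat.one_le_cast.mpr hn) _), herr_of_ne⟩
end

section
/- Let a, b ∈ ℝⁿ be nonzero vectors, let ε ∈ (0,1), and let L be an integer with L ≥ 9n⁶/ε². Define a' = ‖a‖·Round(a/‖a‖, L) and b' = ‖b‖·Round(b/‖b‖, L). Then |⟨a,b⟩ − ⟨a',b'⟩| ≤ ε · max(‖a_I‖·‖b‖, ‖a‖·‖b_I‖), where I = supp(a) ∩ supp(b). -/
open Finset

/-- The Euclidean norm `‖x‖ = √(∑ i, x i ^ 2)` of a vector `x : Fin n → ℝ`. -/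
noncomputable def vnorm {n : ℕ} (x : Fin n → ℝ) : ℝ :=
  Real.sqrt (∑ i, (x i) ^ 2)

/-- `‖x_S‖`: the Euclidean norm of the vector `x` restricted to the index set `S`
(agreeing with `x` on `S` and zero elsewhere). -/
noncomputable def vnormOn {n : ℕ} (S : Finset (Fin n)) (x : Fin n → ℝ) : ℝ :=
  Real.sqrt (∑ i ∈ S, (x i) ^ 2)

/-- The support `{i : x i ≠ 0}` of a vector, as a `Finset`. -/
noncomputable def supp {n : ℕ} (x : Fin n → ℝ) : Finset (Fin n) :=
  Finset.univ.filter fun i => x i ≠ 0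

/-!
Write `Round(z, L) i = sign (z i) √(q i)`. Flooring moves the squares `z i ^ 2` by at most
`δ ≤ n / L` in total, and giving `δ` back to one coordinate moves them by `δ` more, so
`∑ |q i - z i ^ 2| ≤ 2δ`. As `(x - y) ^ 2 ≤ |x ^ 2 - y ^ 2|` for `x, y ≥ 0`, it follows that
`‖z - Round(z, L)‖ ≤ √(2n / L)`. The coordinate receiving `δ` is a largest one, so its square is
already at least `1 / n`, whence `|Round(z, L) i| ≤ √n |z i|` throughout; in particular no support
grows. Writing `u v - u' v' = u (v - v') + v' (u - u')`, both products live on the common support,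
and Cauchy–Schwarz bounds the error by `(1 + √n) √(2n / L)` times the maximum, which is at most `ε`
times it as soon as `L ≥ 8n² / ε²`.
-/

section Sign

lemma abs_sign_le_one (x : ℝ) : |Real.sign x| ≤ 1 := by
  rcases Real.sign_apply_eq x with h | h | h <;> simp [h]

lemma real_sign_mul_abs (x : ℝ) : Real.sign x * |x| = x := by
  rcases lt_trichotomy x 0 with h | rfl | h
  · rw [Real.sign_of_neg h, abs_of_neg h, neg_one_mul, neg_neg]
  · rw [abs_zero, mul_zero]
  · rw [Real.sign_of_pos h, abs_of_pos h, one_mul]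

lemma abs_sign_mul_le (x y : ℝ) : |Real.sign x * y| ≤ |y| := by
  rw [abs_mul]
  exact mul_le_of_le_one_left (abs_nonneg y) (abs_sign_le_one x)

lemma sub_sq_le_abs_sq_sub_sq {x y : ℝ} (hx : 0 ≤ x) (hy : 0 ≤ y) :
    (x - y) ^ 2 ≤ |x ^ 2 - y ^ 2| := by
  have h : |x - y| ≤ |x + y| := by
    rw [abs_of_nonneg (add_nonneg hx hy), abs_le]
    constructor <;> linarith
  calc (x - y) ^ 2 = |x - y| * |x - y| := by rw [abs_mul_abs_self, sq]
    _ ≤ |x + y| * |x - y| := by gcongr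
    _ = |x ^ 2 - y ^ 2| := by rw [← abs_mul, ← sq_sub_sq]

lemma sub_sign_mul_sqrt_sq_le (x : ℝ) {s : ℝ} (hs : 0 ≤ s) :
    (x - Real.sign x * √s) ^ 2 ≤ |x ^ 2 - s| := by
  calc (x - Real.sign x * √s) ^ 2 = (Real.sign x * (|x| - √s)) ^ 2 := by
        rw [mul_sub, real_sign_mul_abs]
    _ ≤ (|x| - √s) ^ 2 := sq_le_sq.mpr (abs_sign_mul_le x _)
    _ ≤ |(|x|) ^ 2 - √s ^ 2| := sub_sq_le_abs_sq_sub_sq (abs_nonneg x) (Real.sqrt_nonneg s)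
    _ = |x ^ 2 - s| := by rw [sq_abs, Real.sq_sqrt hs]

end Sign

/-- The largest multiple of `1 / L` not exceeding `x`; it is `0` for `L = 0`. -/
noncomputable def gridFloor (L : ℕ) (x : ℝ) : ℝ := ⌊x * L⌋ / L

section GridFloor

variable {L : ℕ} {x : ℝ}

lemma gridFloor_zero (L : ℕ) : gridFloor L 0 = 0 := by
  simp [gridFloor]

lemma gridFloor_nonneg (hx : 0 ≤ x) : 0 ≤ gridFloor L x :=
  div_nonneg (Int.cast_nonneg (Int.floor_nonneg.mpr (by positivity))) L.cast_nonneg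

lemma gridFloor_le (hx : 0 ≤ x) : gridFloor L x ≤ x :=
  div_le_of_le_mul₀ L.cast_nonneg hx (Int.floor_le _)

lemma sub_gridFloor_le (hL : 0 < L) : x - gridFloor L x ≤ 1 / L := by
  have hL' : (0 : ℝ) < L := Nat.cast_pos.mpr hL
  rw [gridFloor, sub_le_iff_le_add', ← add_div, le_div_iff₀ hL']
  exact (Int.lt_floor_add_one _).le

lemma sign_mul_sqrt_gridFloor_sq (L : ℕ) (x : ℝ) :
    (Real.sign x * √(gridFloor L (x ^ 2))) ^ 2 = gridFloor L (x ^ 2) := by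
  rw [mul_pow, Real.sq_sqrt (gridFloor_nonneg (sq_nonneg x))]
  rcases lt_trichotomy x 0 with h | rfl | h
  · rw [Real.sign_of_neg h, neg_one_sq, one_mul]
  · rw [zero_pow two_ne_zero, gridFloor_zero, mul_zero]
  · rw [Real.sign_of_pos h, one_pow, one_mul]

end GridFloor

/-- The mass `δ` lost when every squared coordinate of a unit vector `z` is rounded down to a
multiple of `1 / L`. -/
noncomputable def roundingDefect {n : ℕ} (z : Fin n → ℝ) (L : ℕ) : ℝ :=
  1 - ∑ j, gridFloor L (z j ^ 2)

/-- The squared coordinates of `Round(z, L)`: those of `z` rounded down, with the lost mass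
returned to the coordinate `i*`. -/
noncomputable def roundedSq {n : ℕ} [NeZero n] (z : Fin n → ℝ) (L : ℕ) (i : Fin n) : ℝ :=
  gridFloor L (z i ^ 2) + (Pi.single (maxIndex z) (roundingDefect z L) : Fin n → ℝ) i

section UnitVector

variable {n : ℕ} {z : Fin n → ℝ} {L : ℕ}

lemma roundingDefect_eq_sum (hz : ∑ i, z i ^ 2 = 1) :
    roundingDefect z L = ∑ i, (z i ^ 2 - gridFloor L (z i ^ 2)) := by
  rw [roundingDefect, sum_sub_distrib, hz]

lemma roundingDefect_nonneg (hz : ∑ i, z i ^ 2 = 1) : 0 ≤ roundingDefect z L := by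
  rw [roundingDefect_eq_sum hz]
  exact sum_nonneg fun i _ => sub_nonneg.mpr (gridFloor_le (sq_nonneg (z i)))

lemma roundingDefect_le (hz : ∑ i, z i ^ 2 = 1) (hL : 0 < L) : roundingDefect z L ≤ n / L := by
  calc roundingDefect z L = ∑ i, (z i ^ 2 - gridFloor L (z i ^ 2)) := roundingDefect_eq_sum hz
    _ ≤ ∑ _i : Fin n, (1 : ℝ) / L := sum_le_sum fun _ _ => sub_gridFloor_le hL
    _ = n / L := by rw [sum_const, card_univ, Fintype.card_fin, nsmul_eq_mul, mul_one_div]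

variable [NeZero n]

lemma abs_le_abs_maxIndex (z : Fin n → ℝ) (i : Fin n) : |z i| ≤ |z (maxIndex z)| :=
  (Finset.exists_max_image Finset.univ (fun i => |z i|)
    (Finset.univ_nonempty_iff.mpr ⟨⟨0, Nat.pos_of_ne_zero (NeZero.ne n)⟩⟩)).choose_spec.2 i
    (mem_univ i)

lemma sum_sq_le_mul_sq_maxIndex (z : Fin n → ℝ) : ∑ i, z i ^ 2 ≤ n * z (maxIndex z) ^ 2 := by
  calc ∑ i, z i ^ 2 ≤ ∑ _i : Fin n, z (maxIndex z) ^ 2 :=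
        sum_le_sum fun i _ => sq_le_sq.mpr (abs_le_abs_maxIndex z i)
    _ = n * z (maxIndex z) ^ 2 := by rw [sum_const, card_univ, Fintype.card_fin, nsmul_eq_mul]

lemma sum_roundedSq (z : Fin n → ℝ) (L : ℕ) : ∑ i, roundedSq z L i = 1 := by
  simp only [roundedSq]
  rw [sum_add_distrib, Fintype.sum_pi_single', roundingDefect, add_sub_cancel]

lemma gridFloor_le_roundedSq (hz : ∑ i, z i ^ 2 = 1) (i : Fin n) :
    gridFloor L (z i ^ 2) ≤ roundedSq z L i := by
  have hsingle : (0 : Fin n → ℝ) ≤ Pi.single (maxIndex z) (roundingDefect z L) :=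
    Pi.single_nonneg.mpr (roundingDefect_nonneg hz)
  exact le_add_of_nonneg_right (hsingle i)

lemma roundedSq_nonneg (hz : ∑ i, z i ^ 2 = 1) (i : Fin n) : 0 ≤ roundedSq z L i :=
  (gridFloor_nonneg (sq_nonneg _)).trans (gridFloor_le_roundedSq hz i)

lemma roundedSq_le_one (hz : ∑ i, z i ^ 2 = 1) (i : Fin n) : roundedSq z L i ≤ 1 :=
  sum_roundedSq z L ▸ single_le_sum (fun j _ => roundedSq_nonneg hz j) (mem_univ i)

lemma roundedSq_le (hz : ∑ i, z i ^ 2 = 1) (i : Fin n) : roundedSq z L i ≤ n * z i ^ 2 := by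
  by_cases hi : i = maxIndex z
  · rw [hi]
    exact (roundedSq_le_one hz _).trans (hz ▸ sum_sq_le_mul_sq_maxIndex z)
  · have hn : (1 : ℝ) ≤ n := Nat.one_le_cast.mpr NeZero.one_le
    rw [roundedSq, Pi.single_eq_of_ne hi, add_zero]
    exact (gridFloor_le (sq_nonneg _)).trans (le_mul_of_one_le_left (sq_nonneg _) hn)

lemma sum_abs_sq_sub_roundedSq_le (hz : ∑ i, z i ^ 2 = 1) :
    ∑ i, |z i ^ 2 - roundedSq z L i| ≤ 2 * roundingDefect z L := by
  have hterm (i : Fin n) : |z i ^ 2 - roundedSq z L i|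
      ≤ (z i ^ 2 - gridFloor L (z i ^ 2)) + (roundedSq z L i - gridFloor L (z i ^ 2)) := by
    have hfloor : gridFloor L (z i ^ 2) ≤ z i ^ 2 := gridFloor_le (sq_nonneg _)
    have hround : gridFloor L (z i ^ 2) ≤ roundedSq z L i := gridFloor_le_roundedSq hz i
    rw [abs_le]
    constructor <;> linarith
  calc ∑ i, |z i ^ 2 - roundedSq z L i|
      ≤ ∑ i, ((z i ^ 2 - gridFloor L (z i ^ 2)) + (roundedSq z L i - gridFloor L (z i ^ 2))) :=
        sum_le_sum fun i _ => hterm i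
    _ = roundingDefect z L + roundingDefect z L := by
        rw [sum_add_distrib, ← roundingDefect_eq_sum hz, sum_sub_distrib, sum_roundedSq,
          roundingDefect]
    _ = 2 * roundingDefect z L := (two_mul _).symm

lemma roundVec_apply (z : Fin n → ℝ) (L : ℕ) (i : Fin n) :
    roundVec z L i = Real.sign (z i) * √(roundedSq z L i) := by
  have hdef : roundVec z L i = if i = maxIndex z then
      Real.sign (z (maxIndex z)) * √((Real.sign (z (maxIndex z)) *
        √(gridFloor L (z (maxIndex z) ^ 2))) ^ 2 +
          (1 - ∑ j, (Real.sign (z j) * √(gridFloor L (z j ^ 2))) ^ 2))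
      else Real.sign (z i) * √(gridFloor L (z i ^ 2)) := by
    rw [roundVec, dif_neg (NeZero.ne n)]
    rfl
  simp only [hdef, sign_mul_sqrt_gridFloor_sq]
  split_ifs with hi
  · rw [hi, roundedSq, Pi.single_eq_same, roundingDefect]
  · rw [roundedSq, Pi.single_eq_of_ne hi, add_zero]

lemma abs_roundVec_le (hz : ∑ i, z i ^ 2 = 1) (i : Fin n) : |roundVec z L i| ≤ √n * |z i| := by
  calc |roundVec z L i| ≤ |√(roundedSq z L i)| := roundVec_apply z L i ▸ abs_sign_mul_le _ _
    _ = √(roundedSq z L i) := abs_of_nonneg (Real.sqrt_nonneg _)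
    _ ≤ √(n * z i ^ 2) := Real.sqrt_le_sqrt (roundedSq_le hz i)
    _ = √n * |z i| := by rw [Real.sqrt_mul n.cast_nonneg, Real.sqrt_sq_eq_abs]

lemma vnorm_sub_roundVec_le (hz : ∑ i, z i ^ 2 = 1) (hL : 0 < L) :
    vnorm (z - roundVec z L) ≤ √(2 * n / L) := by
  refine Real.sqrt_le_sqrt ?_
  calc ∑ i, (z - roundVec z L) i ^ 2 ≤ ∑ i, |z i ^ 2 - roundedSq z L i| := by
        gcongr with i
        rw [Pi.sub_apply, roundVec_apply]
        exact sub_sign_mul_sqrt_sq_le _ (roundedSq_nonneg hz i)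
    _ ≤ 2 * roundingDefect z L := sum_abs_sq_sub_roundedSq_le hz
    _ ≤ 2 * (n / L) := by gcongr; exact roundingDefect_le hz hL
    _ = 2 * n / L := (mul_div_assoc _ _ _).symm

end UnitVector

section Norms

variable {n : ℕ}

lemma vnorm_nonneg (a : Fin n → ℝ) : 0 ≤ vnorm a := Real.sqrt_nonneg _

lemma vnorm_eq_norm (a : Fin n → ℝ) : vnorm a = ‖WithLp.toLp 2 a‖ := by
  simp only [vnorm, EuclideanSpace.norm_eq, Real.norm_eq_abs, sq_abs]

lemma vnorm_pos {a : Fin n → ℝ} (ha : a ≠ 0) : 0 < vnorm a := by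
  rw [vnorm_eq_norm]
  exact norm_pos_iff.mpr ((WithLp.toLp_eq_zero 2).not.mpr ha)

lemma vnorm_smul (c : ℝ) (a : Fin n → ℝ) : vnorm (c • a) = |c| * vnorm a := by
  rw [vnorm_eq_norm, vnorm_eq_norm, WithLp.toLp_smul, norm_smul, Real.norm_eq_abs]

lemma sum_div_vnorm_sq {a : Fin n → ℝ} (ha : a ≠ 0) : ∑ i, (a i / vnorm a) ^ 2 = 1 := by
  simp only [div_pow]
  rw [← sum_div, div_eq_one_iff_eq (pow_pos (vnorm_pos ha) 2).ne']
  exact (Real.sq_sqrt (sum_nonneg fun i _ => sq_nonneg (a i))).symm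

lemma sum_abs_mul_le_vnormOn_mul_vnorm (S : Finset (Fin n)) (u v : Fin n → ℝ) :
    ∑ k ∈ S, |u k| * |v k| ≤ vnormOn S u * vnorm v := by
  calc ∑ k ∈ S, |u k| * |v k| ≤ √(∑ k ∈ S, |u k| ^ 2) * √(∑ k ∈ S, |v k| ^ 2) :=
        Real.sum_mul_le_sqrt_mul_sqrt S _ _
    _ ≤ vnormOn S u * vnorm v := by
        simp only [sq_abs]
        exact mul_le_mul_of_nonneg_left
          (Real.sqrt_le_sqrt (sum_le_univ_sum_of_nonneg fun i => sq_nonneg (v i)))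
          (Real.sqrt_nonneg _)

lemma abs_sum_mul_sub_sum_mul_le {u v u' v' : Fin n → ℝ} {C : ℝ} (hC : 0 ≤ C)
    (hu : ∀ k, u k = 0 → u' k = 0) (hv : ∀ k, |v' k| ≤ C * |v k|) :
    |(∑ k, u k * v k) - ∑ k, u' k * v' k|
      ≤ vnormOn (supp u ∩ supp v) u * vnorm (v - v')
        + C * (vnormOn (supp u ∩ supp v) v * vnorm (u - u')) := by
  have hsupp : ∀ k ∉ supp u ∩ supp v, u k * v k - u' k * v' k = 0 := by
    intro k hk
    have huv : u k = 0 ∨ v k = 0 := by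
      simpa only [supp, mem_inter, mem_filter_univ, not_and_or, not_not] using hk
    rcases huv with h | h
    · rw [h, hu k h, zero_mul, zero_mul, sub_zero]
    · have hv' : v' k = 0 := abs_nonpos_iff.mp ((hv k).trans_eq (by rw [h, abs_zero, mul_zero]))
      rw [h, hv', mul_zero, mul_zero, sub_zero]
  have hterm (k : Fin n) : |u k * v k - u' k * v' k|
      ≤ |u k| * |(v - v') k| + C * (|v k| * |(u - u') k|) := by
    calc |u k * v k - u' k * v' k| = |u k * (v - v') k + v' k * (u - u') k| := by
          simp only [Pi.sub_apply]
          ring_nf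
      _ ≤ |u k| * |(v - v') k| + |v' k| * |(u - u') k| := by
          simpa only [abs_mul] using abs_add_le (u k * (v - v') k) (v' k * (u - u') k)
      _ ≤ |u k| * |(v - v') k| + C * |v k| * |(u - u') k| := by
          gcongr
          exact hv k
      _ = _ := by rw [mul_assoc C]
  rw [← sum_sub_distrib, ← sum_subset (subset_univ (supp u ∩ supp v)) fun k _ => hsupp k]
  refine (abs_sum_le_sum_abs _ _).trans ((sum_le_sum fun k _ => hterm k).trans ?_)
  rw [sum_add_distrib, ← mul_sum]
  gcongr <;> exact sum_abs_mul_le_vnormOn_mul_vnorm _ _ _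

end Norms

/-- The vector `‖a‖ ⬝ Round(a/‖a‖, L)`. -/
noncomputable def scaledRound {n : ℕ} (a : Fin n → ℝ) (L : ℕ) : Fin n → ℝ :=
  fun i => vnorm a * roundVec (fun j => a j / vnorm a) L i

section ScaledRound

variable {n : ℕ} {a b : Fin n → ℝ} {L : ℕ}

lemma neZero_of_ne_zero (ha : a ≠ 0) : NeZero n :=
  ⟨by rintro rfl; exact ha (Subsingleton.elim _ _)⟩

lemma abs_scaledRound_le (ha : a ≠ 0) (i : Fin n) : |scaledRound a L i| ≤ √n * |a i| := by
  have : NeZero n := neZero_of_ne_zero ha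
  have hpos := vnorm_pos ha
  calc |scaledRound a L i| = vnorm a * |roundVec (fun j => a j / vnorm a) L i| := by
        rw [scaledRound, abs_mul, abs_of_pos hpos]
    _ ≤ vnorm a * (√n * |a i / vnorm a|) := by
        gcongr
        exact abs_roundVec_le (sum_div_vnorm_sq ha) i
    _ = √n * |a i| := by
        rw [abs_div, abs_of_pos hpos]
        field_simp

lemma vnorm_sub_scaledRound_le (ha : a ≠ 0) (hL : 0 < L) :
    vnorm (a - scaledRound a L) ≤ vnorm a * √(2 * n / L) := by
  have : NeZero n := neZero_of_ne_zero ha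
  have hpos := vnorm_pos ha
  let z : Fin n → ℝ := fun j => a j / vnorm a
  have hscale : a - scaledRound a L = vnorm a • (z - roundVec z L) := by
    ext i
    simp only [scaledRound, z, Pi.sub_apply, Pi.smul_apply, smul_eq_mul, mul_sub,
      mul_div_cancel₀ (a i) hpos.ne']
  rw [hscale, vnorm_smul, abs_of_pos hpos]
  gcongr
  exact vnorm_sub_roundVec_le (sum_div_vnorm_sq ha) hL

lemma abs_sum_mul_sub_sum_scaledRound_mul_le (ha : a ≠ 0) (hb : b ≠ 0) (hL : 0 < L) :
    |(∑ k, a k * b k) - ∑ k, scaledRound a L k * scaledRound b L k|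
      ≤ √(2 * n / L) * (1 + √n) * max (vnormOn (supp a ∩ supp b) a * vnorm b)
          (vnorm a * vnormOn (supp a ∩ supp b) b) := by
  set I := supp a ∩ supp b
  have hsupp (k : Fin n) (hk : a k = 0) : scaledRound a L k = 0 := by
    simpa only [hk, abs_zero, mul_zero, abs_nonpos_iff] using abs_scaledRound_le (L := L) ha k
  calc |(∑ k, a k * b k) - ∑ k, scaledRound a L k * scaledRound b L k|
      ≤ vnormOn I a * vnorm (b - scaledRound b L)
          + √n * (vnormOn I b * vnorm (a - scaledRound a L)) :=
        abs_sum_mul_sub_sum_mul_le (Real.sqrt_nonneg _) hsupp (abs_scaledRound_le hb)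
    _ ≤ vnormOn I a * (vnorm b * √(2 * n / L))
          + √n * (vnormOn I b * (vnorm a * √(2 * n / L))) := by
        have hIa : 0 ≤ vnormOn I a := Real.sqrt_nonneg _
        have hIb : 0 ≤ vnormOn I b := Real.sqrt_nonneg _
        gcongr
        · exact vnorm_sub_scaledRound_le hb hL
        · exact vnorm_sub_scaledRound_le ha hL
    _ = √(2 * n / L) * (vnormOn I a * vnorm b + √n * (vnorm a * vnormOn I b)) := by ring
    _ ≤ √(2 * n / L) * (max (vnormOn I a * vnorm b) (vnorm a * vnormOn I b)
          + √n * max (vnormOn I a * vnorm b) (vnorm a * vnormOn I b)) := by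
        gcongr
        · exact le_max_left _ _
        · exact le_max_right _ _
    _ = _ := by ring

lemma sqrt_div_mul_one_add_sqrt_le {ε : ℝ} (hε : 0 < ε) (hn : 0 < n)
    (hL : 8 * (n : ℝ) ^ 2 / ε ^ 2 ≤ L) : √(2 * n / L) * (1 + √n) ≤ ε := by
  have hn' : (1 : ℝ) ≤ n := Nat.one_le_cast.mpr hn
  have hL' : (0 : ℝ) < L := lt_of_lt_of_le (by positivity) hL
  have hsqrt : 1 + √(n : ℝ) ≤ 2 * √n := by linarith [Real.one_le_sqrt.mpr hn']
  refine abs_le_of_sq_le_sq' ?_ hε.le |>.2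
  calc (√(2 * n / L) * (1 + √n)) ^ 2 ≤ (√(2 * n / L) * (2 * √n)) ^ 2 := by gcongr
    _ = 8 * (n : ℝ) ^ 2 / L := by
        rw [mul_pow, mul_pow, Real.sq_sqrt (by positivity), Real.sq_sqrt (by positivity)]
        ring
    _ ≤ ε ^ 2 := (div_le_comm₀ (by positivity) hL').mp hL

theorem round_inner_product_error_general (ha : a ≠ 0) (hb : b ≠ 0) {ε : ℝ} (hε : 0 < ε)
    (hL : 8 * (n : ℝ) ^ 2 / ε ^ 2 ≤ L) :
    |(∑ k, a k * b k) - ∑ k, scaledRound a L k * scaledRound b L k|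
      ≤ ε * max (vnormOn (supp a ∩ supp b) a * vnorm b)
          (vnorm a * vnormOn (supp a ∩ supp b) b) := by
  have hn : 0 < n := (neZero_of_ne_zero ha).pos
  have hL' : 0 < L := Nat.cast_pos.mp (lt_of_lt_of_le (by positivity) hL)
  refine (abs_sum_mul_sub_sum_scaledRound_mul_le ha hb hL').trans ?_
  gcongr
  · exact le_max_of_le_left (mul_nonneg (Real.sqrt_nonneg _) (vnorm_nonneg b))
  · exact sqrt_div_mul_one_add_sqrt_le hε hn hL

end ScaledRound

/-- Rounding preserves inner products: for nonzero `a, b ∈ ℝⁿ`, `ε ∈ (0,1)`, and an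
integer `L ≥ 9n⁶/ε²`, the rounded vectors `a' = ‖a‖ ⬝ Round(a/‖a‖, L)` and
`b' = ‖b‖ ⬝ Round(b/‖b‖, L)` satisfy
`|⟨a,b⟩ - ⟨a',b'⟩| ≤ ε max(‖a_I‖ ‖b‖, ‖a‖ ‖b_I‖)` where `I = supp a ∩ supp b`. -/
theorem round_inner_product_error {n : ℕ} (a b : Fin n → ℝ) (ha0 : a ≠ 0) (hb0 : b ≠ 0)
    (ε : ℝ) (hε : ε ∈ Set.Ioo (0 : ℝ) 1)
    (L : ℕ) (hL : 9 * (n : ℝ) ^ 6 / ε ^ 2 ≤ L)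
    (a' b' : Fin n → ℝ)
    (ha' : a' = fun i => vnorm a * roundVec (fun j => a j / vnorm a) L i)
    (hb' : b' = fun i => vnorm b * roundVec (fun j => b j / vnorm b) L i) :
    |(∑ k, a k * b k) - ∑ k, a' k * b' k|
      ≤ ε * max (vnormOn (supp a ∩ supp b) a * vnorm b)
          (vnorm a * vnormOn (supp a ∩ supp b) b) := by
  subst ha' hb'
  refine round_inner_product_error_general ha0 hb0 hε.1 (le_trans ?_ hL)
  have hn : (1 : ℝ) ≤ n := Nat.one_le_cast.mpr (neZero_of_ne_zero ha0).one_le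
  gcongr <;> norm_num
end
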